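/- Let α, β, γ be real numbers with α > -1/2, γ > -1, α + β + γ > -3/2, α ≤ 1/2 and γ ≥ α − 1. Define, for t ≥ 1, F(t) = ∫₀¹ s^{2α} (∫ₛ¹ u^β (u−s)^γ du) (∫ₜ^{t+1} v^β (v−s)^γ dv) ds, V(t) = ∫₀^{t+1} s^{2α} (∫_{max(s,t)}^{t+1} u^β (u−s)^γ du)² ds, C = ∫₀¹ s^{2α} (∫ₛ¹ u^β (u−s)^γ du)² ds, and r(t) = F(t) / (√C · √V(t)). Then the series ∑_{n=1}^∞ r(n) diverges to +∞ and the integral ∫₁^∞ r(t) dt is infinite. -/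

import Mathlib

open MeasureTheory Filter intervalIntegral

lemma rpow_le_of_comparable {k a x : ℝ} (c : ℝ) (hk : 1 ≤ k) (ha : 0 < a)
    (h1 : a ≤ k * x) (h2 : x ≤ k * a) : x ^ c ≤ k ^ |c| * a ^ c := by
  have hk0 : 0 < k := by linarith
  have hx : 0 < x := by
    by_contra h
    nlinarith [not_lt.mp h]
  rcases le_total 0 c with hc | hc
  · rw [abs_of_nonneg hc, ← Real.mul_rpow hk0.le ha.le]
    exact Real.rpow_le_rpow hx.le h2 hc
  · have h3 : (k * x) ^ c ≤ a ^ c := Real.rpow_le_rpow_of_nonpos ha h1 hc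
    rw [Real.mul_rpow hk0.le hx.le] at h3
    calc x ^ c = k ^ |c| * (k ^ c * x ^ c) := by
          rw [abs_of_nonpos hc, Real.rpow_neg hk0.le, ← mul_assoc,
            inv_mul_cancel₀ (Real.rpow_pos_of_pos hk0 c).ne', one_mul]
      _ ≤ _ := by gcongr

lemma intervalIntegrable_sub_rpow {γ : ℝ} (hγ : -1 < γ) (s a b : ℝ) :
    IntervalIntegrable (fun u : ℝ => (u - s) ^ γ) volume a b := by
  have h := (intervalIntegrable_rpow' (a := a - s) (b := b - s) hγ).comp_sub_right s
  simpa using h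

lemma integral_sub_rpow {γ : ℝ} (hγ : -1 < γ) (s b : ℝ) :
    ∫ u in s..b, (u - s) ^ γ = (b - s) ^ (γ + 1) / (γ + 1) := by
  rw [intervalIntegral.integral_comp_sub_right (fun x : ℝ => x ^ γ) s,
    integral_rpow (Or.inl hγ), sub_self, Real.zero_rpow (by linarith), sub_zero]

lemma intervalIntegrable_rpow_mul_sub_rpow {γ : ℝ} (hγ : -1 < γ) (β : ℝ) {s a b : ℝ}
    (ha : 0 < a) (hb : 0 < b) :
    IntervalIntegrable (fun u : ℝ => u ^ β * (u - s) ^ γ) volume a b := by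
  refine (intervalIntegrable_sub_rpow hγ s a b).continuousOn_mul ?_
  intro u hu
  have : 0 < u := lt_of_lt_of_le (lt_min ha hb) hu.1
  exact (Real.continuousAt_rpow_const u β (Or.inl this.ne')).continuousWithinAt

lemma measurable_integral_rpow_mul_sub_rpow (β γ T : ℝ) {a : ℝ → ℝ} (ha : Measurable a) :
    Measurable (fun s : ℝ => ∫ u in (a s)..T, u ^ β * (u - s) ^ γ) := by
  have key : ∀ l r : ℝ → ℝ, Measurable l → Measurable r →
      Measurable (fun s : ℝ => ∫ u in Set.Ioc (l s) (r s), u ^ β * (u - s) ^ γ) := by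
    intro l r hl hr
    have hS : MeasurableSet {p : ℝ × ℝ | l p.1 < p.2 ∧ p.2 ≤ r p.1} :=
      (measurableSet_lt (hl.comp measurable_fst) measurable_snd).inter
        (measurableSet_le measurable_snd (hr.comp measurable_fst))
    have hm : Measurable (fun p : ℝ × ℝ => p.2 ^ β * (p.2 - p.1) ^ γ) := by fun_prop
    have h := (hm.indicator hS).stronglyMeasurable.integral_prod_right' (ν := volume)
    convert h.measurable using 2 with s
    rw [← MeasureTheory.integral_indicator measurableSet_Ioc]
    rfl
  exact (key a (fun _ => T) ha measurable_const).sub (key (fun _ => T) a measurable_const ha)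

lemma integral_rpow_mul_sub_rpow_pos {γ : ℝ} (hγ : -1 < γ) (β : ℝ) {s a b : ℝ}
    (ha : 0 < a) (hs : s ≤ a) (hab : a < b) :
    0 < ∫ u in a..b, u ^ β * (u - s) ^ γ := by
  refine intervalIntegral_pos_of_pos_on
    (intervalIntegrable_rpow_mul_sub_rpow hγ β ha (ha.trans hab)) ?_ hab
  intro u hu
  exact mul_pos (Real.rpow_pos_of_pos (ha.trans hu.1) _)
    (Real.rpow_pos_of_pos (by linarith [hu.1]) _)

/-- The kernel `∫ₛ¹ u ^ β (u - s) ^ γ du` blows up at `0` slower than `s ^ (-(α + 1/2))`. -/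
lemma exists_integral_rpow_mul_sub_rpow_le {α β γ : ℝ} (hα : -(1/2 : ℝ) < α) (hγ : -1 < γ)
    (hαβγ : -(3/2 : ℝ) < α + β + γ) :
    ∃ δ K : ℝ, 0 < δ ∧ δ < α + 1/2 ∧ 0 < K ∧ ∀ s : ℝ, 0 < s → s < 1 →
      ∫ u in s..1, u ^ β * (u - s) ^ γ ≤ K * s ^ (-δ) := by
  obtain ⟨δ, h1, h2⟩ : ∃ δ, max 0 (-(β + γ + 1)) < δ ∧ δ < α + 1/2 :=
    exists_between (max_lt (by linarith) (by linarith))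
  have hδ : 0 < δ := (le_max_left _ _).trans_lt h1
  have hδ' : -(β + γ + 1) < δ := (le_max_right _ _).trans_lt h1
  set m := min (β + δ) 0 with hm
  have hp : -1 < γ + m := by
    rcases min_choice (β + δ) 0 with h | h <;> rw [hm, h] <;> linarith
  refine ⟨δ, 1 / (γ + m + 1), hδ, h2, by apply one_div_pos.2; linarith, ?_⟩
  intro s hs hs1
  calc ∫ u in s..1, u ^ β * (u - s) ^ γ
      ≤ ∫ u in s..1, s ^ (-δ) * (u - s) ^ (γ + m) := by
        refine integral_mono_on_of_le_Ioo hs1.le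
          (intervalIntegrable_rpow_mul_sub_rpow hγ β hs one_pos)
          ((intervalIntegrable_sub_rpow hp s s 1).const_mul _) ?_
        intro u hu
        have hu0 : 0 < u := hs.trans hu.1
        have hus : 0 < u - s := sub_pos.2 hu.1
        have e1 : u ^ (-δ) ≤ s ^ (-δ) :=
          Real.rpow_le_rpow_of_nonpos hs hu.1.le (by linarith)
        have e2 : u ^ (β + δ) ≤ (u - s) ^ m :=
          (Real.rpow_le_rpow_of_exponent_ge hu0 hu.2.le (min_le_left _ _)).trans
            (Real.rpow_le_rpow_of_nonpos hus (by linarith) (min_le_right _ _))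
        calc u ^ β * (u - s) ^ γ = u ^ (-δ) * u ^ (β + δ) * (u - s) ^ γ := by
              rw [← Real.rpow_add hu0]; ring_nf
          _ ≤ s ^ (-δ) * (u - s) ^ m * (u - s) ^ γ := by gcongr
          _ = s ^ (-δ) * (u - s) ^ (γ + m) := by rw [Real.rpow_add hus]; ring
    _ = s ^ (-δ) * ((1 - s) ^ (γ + m + 1) / (γ + m + 1)) := by
        rw [intervalIntegral.integral_const_mul, integral_sub_rpow hp]
    _ ≤ s ^ (-δ) * (1 / (γ + m + 1)) := by
        gcongr
        · linarith
        · exact Real.rpow_le_one (by linarith) (by linarith) (by linarith)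
    _ = _ := mul_comm _ _

lemma IntervalIntegrable.of_nonneg_of_le_Ioo {f g : ℝ → ℝ} {a b : ℝ} (hab : a ≤ b)
    (hf : Measurable f) (hg : IntervalIntegrable g volume a b)
    (h0 : ∀ x ∈ Set.Ioo a b, 0 ≤ f x) (h : ∀ x ∈ Set.Ioo a b, f x ≤ g x) :
    IntervalIntegrable f volume a b := by
  rw [intervalIntegrable_iff_integrableOn_Ioo_of_le hab] at hg ⊢
  refine Integrable.mono' hg hf.aestronglyMeasurable ?_
  filter_upwards [ae_restrict_mem measurableSet_Ioo] with x hx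
  rw [Real.norm_of_nonneg (h0 x hx)]
  exact h x hx

lemma integral_Ioc_sub_rpow_le {γ t s : ℝ} (hγ : -1 < γ) (hst : s < t + 1) :
    ∫ u in (max s t)..(t+1), (u - s) ^ γ ≤
      (3 ^ |γ| + 2 ^ (γ + 1) / (γ + 1) * 3 ^ |γ|) * (t + 2 - s) ^ γ := by
  have hy : 0 < t + 2 - s := by linarith
  have hpow : 0 < (t + 2 - s) ^ γ := Real.rpow_pos_of_pos hy _
  have hγ1 : 0 < γ + 1 := by linarith
  have h3 : (0:ℝ) < 3 ^ |γ| := by positivity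
  have h2 : (0:ℝ) ≤ 2 ^ (γ + 1) / (γ + 1) := by positivity
  rcases le_total s (t - 1) with h | h
  · rw [max_eq_right (by linarith)]
    calc ∫ u in t..(t+1), (u - s) ^ γ
        ≤ ∫ _u in t..(t+1), 3 ^ |γ| * (t + 2 - s) ^ γ := by
          refine integral_mono_on_of_le_Ioo (by linarith)
            (intervalIntegrable_sub_rpow hγ _ _ _) intervalIntegrable_const ?_
          intro u hu
          exact rpow_le_of_comparable γ (by norm_num) hy (by linarith [hu.1])
            (by linarith [hu.2])
      _ = 3 ^ |γ| * (t + 2 - s) ^ γ := by simp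
      _ ≤ _ := by
          gcongr
          exact le_add_of_nonneg_right (by positivity)
  · calc ∫ u in (max s t)..(t+1), (u - s) ^ γ
        ≤ ∫ u in s..(t+1), (u - s) ^ γ := by
          refine integral_mono_interval (le_max_left _ _) (max_le hst.le (by linarith)) le_rfl
            ?_ (intervalIntegrable_sub_rpow hγ _ _ _)
          filter_upwards [ae_restrict_mem measurableSet_Ioc] with u hu
          exact Real.rpow_nonneg (by linarith [hu.1]) _
      _ = (t + 1 - s) ^ (γ + 1) / (γ + 1) := integral_sub_rpow hγ _ _
      _ ≤ 2 ^ (γ + 1) / (γ + 1) := by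
          gcongr
          linarith
      _ ≤ 2 ^ (γ + 1) / (γ + 1) * (3 ^ |γ| * (t + 2 - s) ^ γ) := by
          refine le_mul_of_one_le_right h2 ?_
          have := rpow_le_of_comparable (k := 3) (a := t + 2 - s) (x := 1) γ (by norm_num) hy
            (by linarith) (by linarith)
          rwa [Real.one_rpow] at this
      _ ≤ _ := by
          rw [← mul_assoc]
          gcongr
          exact le_add_of_nonneg_left h3.le

lemma rpow_mul_sq_rpow_le {α γ t s : ℝ} (hα' : α ≤ 1/2) (hγ' : α - 1 ≤ γ) (ht : 2 ≤ t)
    (hs : 0 < s) (hst : s < t + 1) :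
    s ^ (2*α) * ((t + 2 - s) ^ γ) ^ 2 ≤
      (3 ^ |2*γ| + 3 ^ |2*α| * 3 ^ |2*γ+1|) *
        (t ^ (2*γ) * (s ^ (2*α) + t ^ 2 * (t + 2 - s)⁻¹)) := by
  have hy : 0 < t + 2 - s := by linarith
  have ht0 : 0 < t := by linarith
  have hsq : ((t + 2 - s) ^ γ) ^ 2 = (t + 2 - s) ^ (2*γ) := by
    rw [← Real.rpow_mul_natCast hy.le]
    congr 1
    push_cast
    ring
  rw [hsq]
  rcases le_total s (t/2) with h | h
  · have e := rpow_le_of_comparable (k := 3) (a := t) (x := t + 2 - s) (2*γ) (by norm_num) ht0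
      (by linarith) (by linarith)
    calc s ^ (2*α) * (t + 2 - s) ^ (2*γ) ≤ s ^ (2*α) * (3 ^ |2*γ| * t ^ (2*γ)) := by gcongr
      _ = 3 ^ |2*γ| * (t ^ (2*γ) * (s ^ (2*α) + 0)) := by ring
      _ ≤ _ := by
        gcongr
        · exact le_add_of_nonneg_right (by positivity)
        · positivity
  · have e1 := rpow_le_of_comparable (k := 3) (a := t) (x := s) (2*α) (by norm_num) ht0
      (by linarith) (by linarith)
    have e2 : (t + 2 - s) ^ (2*γ+1) ≤ 3 ^ |2*γ+1| * t ^ (2*γ+2-2*α) := by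
      rcases le_total 0 (2*γ+1) with hc | hc
      · rw [abs_of_nonneg hc]
        calc (t + 2 - s) ^ (2*γ+1) ≤ (3 * t) ^ (2*γ+1) := by
              gcongr
              linarith
          _ = 3 ^ (2*γ+1) * t ^ (2*γ+1) := Real.mul_rpow (by norm_num) ht0.le
          _ ≤ _ := by
              gcongr 3 ^ (2*γ+1) * ?_
              exact Real.rpow_le_rpow_of_exponent_le (by linarith) (by linarith)
      · calc (t + 2 - s) ^ (2*γ+1) ≤ 1 :=
              Real.rpow_le_one_of_one_le_of_nonpos (by linarith) hc
          _ ≤ _ := one_le_mul_of_one_le_of_one_le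
              (Real.one_le_rpow (by norm_num) (abs_nonneg _))
              (Real.one_le_rpow (by linarith) (by linarith))
    have e3 : (t + 2 - s) ^ (2*γ) = (t + 2 - s) ^ (2*γ+1) * (t + 2 - s)⁻¹ := by
      rw [Real.rpow_add hy, Real.rpow_one, mul_assoc, mul_inv_cancel₀ hy.ne', mul_one]
    have e4 : t ^ (2*α) * t ^ (2*γ+2-2*α) = t ^ (2*γ) * t ^ 2 := by
      rw [← Real.rpow_add ht0, ← Real.rpow_natCast t 2, ← Real.rpow_add ht0]
      congr 1
      push_cast
      ring
    calc s ^ (2*α) * (t + 2 - s) ^ (2*γ)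
        ≤ (3 ^ |2*α| * t ^ (2*α)) * (3 ^ |2*γ+1| * t ^ (2*γ+2-2*α) * (t + 2 - s)⁻¹) := by
          rw [e3]
          gcongr
      _ = 3 ^ |2*α| * 3 ^ |2*γ+1| * (t ^ (2*α) * t ^ (2*γ+2-2*α) * (t + 2 - s)⁻¹) := by ring
      _ = 3 ^ |2*α| * 3 ^ |2*γ+1| * (t ^ (2*γ) * (0 + t ^ 2 * (t + 2 - s)⁻¹)) := by
          rw [e4]; ring
      _ ≤ _ := by
        gcongr
        · exact le_add_of_nonneg_left (by positivity)
        · positivity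

lemma exists_incrementVariance_bound {α β γ : ℝ} (hα : -(1/2 : ℝ) < α) (hγ : -1 < γ)
    (hα' : α ≤ 1/2) (hγ' : α - 1 ≤ γ) :
    ∃ K : ℝ, 0 < K ∧ ∀ t : ℝ, 2 ≤ t →
      0 < (∫ s in (0:ℝ)..(t+1), s ^ (2*α) *
        (∫ u in (max s t)..(t+1), u ^ β * (u - s) ^ γ) ^ 2) ∧
      (∫ s in (0:ℝ)..(t+1), s ^ (2*α) *
        (∫ u in (max s t)..(t+1), u ^ β * (u - s) ^ γ) ^ 2) ≤
        K * ((t ^ (β + γ + 1)) ^ 2 * Real.log (t + 2)) := by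
  set A : ℝ := 3 ^ |γ| + 2 ^ (γ + 1) / (γ + 1) * 3 ^ |γ| with hA
  set B : ℝ := 3 ^ |2*γ| + 3 ^ |2*α| * 3 ^ |2*γ+1| with hB
  have hγ1 : 0 < γ + 1 := by linarith
  have hα1 : 0 < 2 * α + 1 := by linarith
  have hA0 : 0 < A := by positivity
  have hB0 : 0 < B := by positivity
  refine ⟨(3 ^ |β| * A) ^ 2 * B * (4 / (2*α+1) + 1), by positivity, ?_⟩
  intro t ht
  have ht0 : 0 < t := by linarith
  set D : ℝ := (3 ^ |β| * A * t ^ β) ^ 2 * B * t ^ (2*γ) with hD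
  have hD0 : 0 < D := by positivity
  have hlog : 1 ≤ Real.log (t + 2) := by
    rw [Real.le_log_iff_exp_le (by linarith)]
    linarith [Real.exp_one_lt_d9]
  have hinner_pos : ∀ s ∈ Set.Ioo 0 (t+1),
      0 < ∫ u in (max s t)..(t+1), u ^ β * (u - s) ^ γ := fun s hs =>
    integral_rpow_mul_sub_rpow_pos hγ β (lt_max_of_lt_right ht0) (le_max_left _ _)
      (max_lt hs.2 (by linarith))
  have hinner : ∀ s ∈ Set.Ioo 0 (t+1), ∫ u in (max s t)..(t+1), u ^ β * (u - s) ^ γ ≤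
      3 ^ |β| * t ^ β * (A * (t + 2 - s) ^ γ) := by
    intro s hs
    have hmax : max s t ≤ t + 1 := max_le hs.2.le (by linarith)
    have hmax0 : 0 < max s t := lt_max_of_lt_right ht0
    calc ∫ u in (max s t)..(t+1), u ^ β * (u - s) ^ γ
        ≤ ∫ u in (max s t)..(t+1), 3 ^ |β| * t ^ β * (u - s) ^ γ := by
          refine integral_mono_on_of_le_Ioo hmax
            (intervalIntegrable_rpow_mul_sub_rpow hγ β hmax0 (by linarith))
            ((intervalIntegrable_sub_rpow hγ _ _ _).const_mul _) ?_
          intro u hu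
          have hut : t < u := (le_max_right _ _).trans_lt hu.1
          have hus : s < u := (le_max_left _ _).trans_lt hu.1
          have := rpow_le_of_comparable (k := 3) β (by norm_num) ht0
            (show t ≤ 3 * u by linarith) (by linarith [hu.2])
          have hus0 : 0 ≤ u - s := by linarith
          gcongr
      _ = 3 ^ |β| * t ^ β * ∫ u in (max s t)..(t+1), (u - s) ^ γ :=
          intervalIntegral.integral_const_mul _ _
      _ ≤ _ := by
          gcongr
          exact integral_Ioc_sub_rpow_le hγ hs.2
  have hle : ∀ s ∈ Set.Ioo 0 (t+1),
      s ^ (2*α) * (∫ u in (max s t)..(t+1), u ^ β * (u - s) ^ γ) ^ 2 ≤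
        D * (s ^ (2*α) + t ^ 2 * (t + 2 - s)⁻¹) := by
    intro s hs
    have hs0 : 0 < s := hs.1
    have h0 := (hinner_pos s hs).le
    calc s ^ (2*α) * (∫ u in (max s t)..(t+1), u ^ β * (u - s) ^ γ) ^ 2
        ≤ s ^ (2*α) * (3 ^ |β| * t ^ β * (A * (t + 2 - s) ^ γ)) ^ 2 := by
          gcongr
          exact hinner s hs
      _ = (3 ^ |β| * A * t ^ β) ^ 2 * (s ^ (2*α) * ((t + 2 - s) ^ γ) ^ 2) := by ring
      _ ≤ (3 ^ |β| * A * t ^ β) ^ 2 * (B * (t ^ (2*γ) *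
            (s ^ (2*α) + t ^ 2 * (t + 2 - s)⁻¹))) :=
          mul_le_mul_of_nonneg_left (rpow_mul_sq_rpow_le hα' hγ' ht hs0 hs.2) (by positivity)
      _ = _ := by rw [hD]; ring
  have hint_pow : IntervalIntegrable (fun s : ℝ => s ^ (2*α)) volume 0 (t+1) :=
    intervalIntegrable_rpow' (by linarith)
  have hint_inv : IntervalIntegrable (fun s : ℝ => t ^ 2 * (t + 2 - s)⁻¹) volume 0 (t+1) := by
    refine ContinuousOn.intervalIntegrable (continuousOn_const.mul (ContinuousOn.inv₀ ?_ ?_))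
    · fun_prop
    · intro s hs
      rw [Set.uIcc_of_le (by linarith)] at hs
      have : 0 < t + 2 - s := by linarith [hs.2]
      exact this.ne'
  have hmaj := (hint_pow.add hint_inv).const_mul D
  have hmeas : Measurable (fun s : ℝ => s ^ (2*α) *
      (∫ u in (max s t)..(t+1), u ^ β * (u - s) ^ γ) ^ 2) := by
    have := measurable_integral_rpow_mul_sub_rpow β γ (t+1)
      (measurable_id.max (measurable_const (a := t)))
    exact (measurable_id.pow_const _).mul (this.pow_const _)
  have hpos : ∀ s ∈ Set.Ioo 0 (t+1),
      0 < s ^ (2*α) * (∫ u in (max s t)..(t+1), u ^ β * (u - s) ^ γ) ^ 2 := fun s hs =>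
    mul_pos (Real.rpow_pos_of_pos hs.1 _) (pow_pos (hinner_pos s hs) 2)
  have hint := IntervalIntegrable.of_nonneg_of_le_Ioo (by linarith) hmeas hmaj
    (fun s hs => (hpos s hs).le) hle
  refine ⟨intervalIntegral_pos_of_pos_on hint hpos (by linarith), ?_⟩
  have hval : ∫ s in (0:ℝ)..(t+1), (t + 2 - s)⁻¹ = Real.log (t + 2) := by
    rw [intervalIntegral.integral_comp_sub_left (fun x : ℝ => x⁻¹) (t+2),
      integral_inv_of_pos (by linarith) (by linarith)]
    congr 1
    rw [show t + 2 - (t + 1) = 1 by ring, sub_zero, div_one]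
  have hpw : (t + 1) ^ (2*α+1) ≤ 4 * t ^ 2 := by
    calc (t + 1) ^ (2*α+1) ≤ (t + 1) ^ (2:ℝ) :=
          Real.rpow_le_rpow_of_exponent_le (by linarith) (by linarith)
      _ = (t + 1) ^ 2 := Real.rpow_two _
      _ ≤ _ := by nlinarith
  have hDt : D * t ^ 2 = (3 ^ |β| * A) ^ 2 * B * (t ^ (β + γ + 1)) ^ 2 := by
    rw [hD, Real.rpow_add ht0, Real.rpow_add ht0, Real.rpow_one, two_mul, Real.rpow_add ht0]
    ring
  calc (∫ s in (0:ℝ)..(t+1), s ^ (2*α) *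
        (∫ u in (max s t)..(t+1), u ^ β * (u - s) ^ γ) ^ 2)
      ≤ ∫ s in (0:ℝ)..(t+1), D * (s ^ (2*α) + t ^ 2 * (t + 2 - s)⁻¹) :=
        integral_mono_on_of_le_Ioo (by linarith) hint hmaj hle
    _ = D * ((t + 1) ^ (2*α+1) / (2*α+1) + t ^ 2 * Real.log (t + 2)) := by
        rw [intervalIntegral.integral_const_mul,
          intervalIntegral.integral_add hint_pow hint_inv,
          intervalIntegral.integral_const_mul, hval, integral_rpow (Or.inl (by linarith)),
          Real.zero_rpow hα1.ne', sub_zero]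
    _ ≤ D * (4 * t ^ 2 * Real.log (t + 2) / (2*α+1) + t ^ 2 * Real.log (t + 2)) := by
        gcongr
        exact hpw.trans (le_mul_of_one_le_right (by positivity) hlog)
    _ = D * t ^ 2 * ((4 / (2*α+1) + 1) * Real.log (t + 2)) := by ring
    _ = _ := by rw [hDt]; ring

lemma intervalIntegrable_rpow_mul_kernel {α β γ : ℝ} (hα : -(1/2 : ℝ) < α) (hγ : -1 < γ)
    (hαβγ : -(3/2 : ℝ) < α + β + γ) :
    IntervalIntegrable (fun s : ℝ => s ^ (2*α) * ∫ u in s..1, u ^ β * (u - s) ^ γ)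
      volume 0 1 ∧
    IntervalIntegrable (fun s : ℝ => s ^ (2*α) * (∫ u in s..1, u ^ β * (u - s) ^ γ) ^ 2)
      volume 0 1 := by
  obtain ⟨δ, K, hδ, hδα, hK, hle⟩ := exists_integral_rpow_mul_sub_rpow_le hα hγ hαβγ
  have hg := measurable_integral_rpow_mul_sub_rpow β γ 1 measurable_id
  have hg0 : ∀ s ∈ Set.Ioo (0:ℝ) 1, 0 < ∫ u in s..1, u ^ β * (u - s) ^ γ := fun s hs =>
    integral_rpow_mul_sub_rpow_pos hγ β hs.1 le_rfl hs.2
  have hp : Measurable (fun s : ℝ => s ^ (2*α)) := measurable_id.pow_const _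
  constructor
  · refine IntervalIntegrable.of_nonneg_of_le_Ioo zero_le_one (hp.mul hg)
      ((intervalIntegrable_rpow' (r := 2*α + -δ) (by linarith)).const_mul K)
      (fun s hs => mul_nonneg (Real.rpow_nonneg hs.1.le _) (hg0 s hs).le) ?_
    intro s hs
    have hs0 : 0 < s := hs.1
    calc s ^ (2*α) * ∫ u in s..1, u ^ β * (u - s) ^ γ ≤ s ^ (2*α) * (K * s ^ (-δ)) := by
          gcongr
          exact hle s hs.1 hs.2
      _ = K * s ^ (2*α + -δ) := by rw [Real.rpow_add hs.1]; ring
  · refine IntervalIntegrable.of_nonneg_of_le_Ioo zero_le_one (hp.mul (hg.pow_const 2))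
      ((intervalIntegrable_rpow' (r := 2*α + (-δ + -δ)) (by linarith)).const_mul (K ^ 2))
      (fun s hs => mul_nonneg (Real.rpow_nonneg hs.1.le _) (sq_nonneg _)) ?_
    intro s hs
    have hs0 : 0 < s := hs.1
    calc s ^ (2*α) * (∫ u in s..1, u ^ β * (u - s) ^ γ) ^ 2
        ≤ s ^ (2*α) * (K * s ^ (-δ)) ^ 2 := by
          gcongr
          · exact (hg0 s hs).le
          · exact hle s hs.1 hs.2
      _ = K ^ 2 * s ^ (2*α + (-δ + -δ)) := by
          rw [Real.rpow_add hs.1, Real.rpow_add hs.1]; ring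

lemma exists_covariance_lower_bound {α β γ : ℝ} (hα : -(1/2 : ℝ) < α) (hγ : -1 < γ)
    (hαβγ : -(3/2 : ℝ) < α + β + γ) :
    ∃ c : ℝ, 0 < c ∧ ∀ t : ℝ, 2 ≤ t →
      c * t ^ (β + γ) ≤ ∫ s in (0:ℝ)..1, s ^ (2*α) *
        (∫ u in s..1, u ^ β * (u - s) ^ γ) * (∫ v in t..(t+1), v ^ β * (v - s) ^ γ) := by
  have hint := (intervalIntegrable_rpow_mul_kernel hα hγ hαβγ).1
  have hpos : ∀ s ∈ Set.Ioo (0:ℝ) 1, 0 < s ^ (2*α) * ∫ u in s..1, u ^ β * (u - s) ^ γ :=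
    fun s hs => mul_pos (Real.rpow_pos_of_pos hs.1 _)
      (integral_rpow_mul_sub_rpow_pos hγ β hs.1 le_rfl hs.2)
  set G := ∫ s in (0:ℝ)..1, s ^ (2*α) * ∫ u in s..1, u ^ β * (u - s) ^ γ with hG
  have hG0 : 0 < G := intervalIntegral_pos_of_pos_on hint hpos one_pos
  have h3 : (0:ℝ) < 3 ^ |β| * 3 ^ |γ| := by positivity
  refine ⟨(3 ^ |β| * 3 ^ |γ|)⁻¹ * G, by positivity, ?_⟩
  intro t ht
  have ht0 : 0 < t := by linarith
  have hsplit : t ^ (β + γ) = t ^ β * t ^ γ := Real.rpow_add ht0 _ _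
  have hk : ∀ s ∈ Set.Ioo (0:ℝ) 1,
      (3 ^ |β| * 3 ^ |γ|)⁻¹ * t ^ (β + γ) ≤ ∫ v in t..(t+1), v ^ β * (v - s) ^ γ ∧
      ∫ v in t..(t+1), v ^ β * (v - s) ^ γ ≤ 3 ^ |β| * 3 ^ |γ| * t ^ (β + γ) := by
    intro s hs
    have hi := intervalIntegrable_rpow_mul_sub_rpow hγ β (s := s) ht0
      (show 0 < t + 1 by linarith)
    constructor
    · calc (3 ^ |β| * 3 ^ |γ|)⁻¹ * t ^ (β + γ)
          = ∫ _v in t..(t+1), (3 ^ |β| * 3 ^ |γ|)⁻¹ * t ^ (β + γ) := by simp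
        _ ≤ _ := by
          refine integral_mono_on_of_le_Ioo (by linarith) intervalIntegrable_const hi ?_
          intro v hv
          have hv0 : 0 < v := ht0.trans hv.1
          have hvs : 0 < v - s := by linarith [hv.1, hs.2]
          have e1 := rpow_le_of_comparable (k := 3) (a := v) (x := t) β (by norm_num) hv0
            (by linarith [hv.2]) (by linarith [hv.1])
          have e2 := rpow_le_of_comparable (k := 3) (a := v - s) (x := t) γ (by norm_num) hvs
            (by linarith [hv.2, hs.1]) (by linarith [hv.1, hs.2])
          rw [inv_mul_le_iff₀ h3, hsplit]
          calc t ^ β * t ^ γ ≤ (3 ^ |β| * v ^ β) * (3 ^ |γ| * (v - s) ^ γ) := by gcongr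
            _ = _ := by ring
    · calc ∫ v in t..(t+1), v ^ β * (v - s) ^ γ
          ≤ ∫ _v in t..(t+1), 3 ^ |β| * 3 ^ |γ| * t ^ (β + γ) := by
            refine integral_mono_on_of_le_Ioo (by linarith) hi intervalIntegrable_const ?_
            intro v hv
            have hv0 : 0 < v := ht0.trans hv.1
            have hvs : 0 < v - s := by linarith [hv.1, hs.2]
            have e1 := rpow_le_of_comparable (k := 3) (a := t) (x := v) β (by norm_num) ht0
              (by linarith [hv.1]) (by linarith [hv.2])
            have e2 := rpow_le_of_comparable (k := 3) (a := t) (x := v - s) γ (by norm_num) ht0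
              (by linarith [hv.1, hs.2]) (by linarith [hv.2, hs.1])
            rw [hsplit]
            calc v ^ β * (v - s) ^ γ ≤ (3 ^ |β| * t ^ β) * (3 ^ |γ| * t ^ γ) := by gcongr
              _ = _ := by ring
        _ = _ := by simp
  have hmeas : Measurable (fun s : ℝ => s ^ (2*α) *
      (∫ u in s..1, u ^ β * (u - s) ^ γ) * (∫ v in t..(t+1), v ^ β * (v - s) ^ γ)) :=
    ((measurable_id.pow_const _).mul
      (measurable_integral_rpow_mul_sub_rpow β γ 1 measurable_id)).mul
      (measurable_integral_rpow_mul_sub_rpow β γ (t+1) measurable_const)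
  have hlow0 : 0 ≤ (3 ^ |β| * 3 ^ |γ|)⁻¹ * t ^ (β + γ) := by positivity
  have hint' := IntervalIntegrable.of_nonneg_of_le_Ioo zero_le_one hmeas
    (hint.mul_const (3 ^ |β| * 3 ^ |γ| * t ^ (β + γ)))
    (fun s hs => mul_nonneg (hpos s hs).le (hlow0.trans (hk s hs).1))
    (fun s hs => mul_le_mul_of_nonneg_left (hk s hs).2 (hpos s hs).le)
  calc (3 ^ |β| * 3 ^ |γ|)⁻¹ * G * t ^ (β + γ)
      = ∫ s in (0:ℝ)..1, s ^ (2*α) * (∫ u in s..1, u ^ β * (u - s) ^ γ) *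
          ((3 ^ |β| * 3 ^ |γ|)⁻¹ * t ^ (β + γ)) := by
        rw [intervalIntegral.integral_mul_const]; ring
    _ ≤ _ := integral_mono_on_of_le_Ioo zero_le_one (hint.mul_const _) hint'
        (fun s hs => mul_le_mul_of_nonneg_left (hk s hs).1 (hpos s hs).le)

lemma tendsto_sum_inv_mul_log :
    Tendsto (fun N : ℕ => ∑ n ∈ Finset.range N, (((n:ℝ) + 4) * Real.log ((n:ℝ) + 4))⁻¹)
      atTop atTop := by
  have hstep : ∀ n : ℕ, Real.log (Real.log ((n + 1 : ℕ) + 4)) - Real.log (Real.log ((n:ℝ) + 4))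
      ≤ (((n:ℝ) + 4) * Real.log ((n:ℝ) + 4))⁻¹ := by
    intro n
    have hx : (0:ℝ) < (n:ℝ) + 4 := by positivity
    have hn : (0:ℝ) ≤ n := n.cast_nonneg
    have hl : 0 < Real.log ((n:ℝ) + 4) := Real.log_pos (by linarith)
    have hl' : 0 < Real.log ((n + 1 : ℕ) + 4) := Real.log_pos (by push_cast; linarith)
    have hd : Real.log ((n + 1 : ℕ) + 4) - Real.log ((n:ℝ) + 4) ≤ ((n:ℝ) + 4)⁻¹ := by
      rw [← Real.log_div (by positivity) hx.ne']
      refine (Real.log_le_sub_one_of_pos (by positivity)).trans (le_of_eq ?_)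
      push_cast
      field_simp
      ring
    rw [← Real.log_div hl'.ne' hl.ne']
    calc Real.log (Real.log ((n + 1 : ℕ) + 4) / Real.log ((n:ℝ) + 4))
        ≤ Real.log ((n + 1 : ℕ) + 4) / Real.log ((n:ℝ) + 4) - 1 :=
          Real.log_le_sub_one_of_pos (by positivity)
      _ = (Real.log ((n + 1 : ℕ) + 4) - Real.log ((n:ℝ) + 4)) / Real.log ((n:ℝ) + 4) := by
          field_simp
      _ ≤ ((n:ℝ) + 4)⁻¹ / Real.log ((n:ℝ) + 4) := by gcongr
      _ = _ := by rw [mul_inv]; rfl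
  have htel : ∀ N : ℕ, Real.log (Real.log ((N:ℝ) + 4)) - Real.log (Real.log ((0:ℕ) + 4)) ≤
      ∑ n ∈ Finset.range N, (((n:ℝ) + 4) * Real.log ((n:ℝ) + 4))⁻¹ := by
    intro N
    rw [← Finset.sum_range_sub (fun n : ℕ => Real.log (Real.log ((n:ℝ) + 4)))]
    exact Finset.sum_le_sum fun n _ => hstep n
  refine tendsto_atTop_mono htel (tendsto_atTop_add_const_right _ _ ?_)
  exact Real.tendsto_log_atTop.comp (Real.tendsto_log_atTop.comp
    (tendsto_atTop_add_const_right _ _ tendsto_natCast_atTop_atTop))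

lemma lintegral_inv_mul_log_eq_top {c : ℝ} (hc : 0 < c) :
    ∫⁻ t in Set.Ici (2:ℝ), ENNReal.ofReal (c * ((t + 2) * Real.log (t + 2))⁻¹) = ⊤ := by
  have hderiv : ∀ t ∈ Set.Ici (2:ℝ), HasDerivAt (fun x : ℝ => c * Real.log (Real.log (x + 2)))
      (c * ((t + 2) * Real.log (t + 2))⁻¹) t := by
    intro t ht
    have ht2 : (2:ℝ) ≤ t := ht
    have hl : 0 < Real.log (t + 2) := Real.log_pos (by linarith)
    have h := ((((hasDerivAt_id' t).add_const 2).log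
      (show t + 2 ≠ 0 by linarith)).log hl.ne').const_mul c
    rwa [one_div, div_eq_mul_inv, ← mul_inv] at h
  have htend : Tendsto (fun x : ℝ => c * Real.log (Real.log (x + 2))) atTop atTop :=
    (Real.tendsto_log_atTop.comp (Real.tendsto_log_atTop.comp
      (tendsto_atTop_add_const_right _ _ tendsto_id))).const_mul_atTop hc
  have hnot : ¬ IntegrableOn (fun t : ℝ => c * ((t + 2) * Real.log (t + 2))⁻¹)
      (Set.Ici 2) := by
    refine not_integrableOn_of_tendsto_norm_atTop_of_deriv_isBigO_filter atTop
      (Ici_mem_atTop 2) (f := fun x : ℝ => c * Real.log (Real.log (x + 2))) ?_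
      (tendsto_norm_atTop_atTop.comp htend) ?_
    · filter_upwards [Ici_mem_atTop 2] with t ht using (hderiv t ht).differentiableAt
    · refine Asymptotics.IsBigO.of_bound 1 ?_
      filter_upwards [Ici_mem_atTop 2] with t ht
      rw [(hderiv t ht).deriv, one_mul]
  by_contra h
  refine hnot ⟨Measurable.aestronglyMeasurable (by fun_prop), ?_⟩
  rw [hasFiniteIntegral_iff_ofReal]
  · exact lt_top_iff_ne_top.2 h
  · filter_upwards [ae_restrict_mem measurableSet_Ici] with t ht
    have ht2 : (2:ℝ) ≤ t := ht
    have hl : 0 < Real.log (t + 2) := Real.log_pos (by linarith)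
    have ht0 : 0 < t + 2 := by linarith
    show 0 ≤ c * ((t + 2) * Real.log (t + 2))⁻¹
    positivity

/-- Theorem 3.5 (consequence): if `α ≤ 1/2` and `γ ≥ α - 1`, then
`∑_{n≥1} corr(X₁, X_{n+1} - X_n)` diverges to `+∞` and
`∫₁^∞ corr(X₁, X_{t+1} - X_t) dt` is infinite. -/
theorem stmt_11 (α β γ : ℝ) (hα : -(1/2 : ℝ) < α) (hγ : -1 < γ)
    (hαβγ : -(3/2 : ℝ) < α + β + γ) (hα' : α ≤ 1/2) (hγ' : α - 1 ≤ γ)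
    (F V r : ℝ → ℝ) (C : ℝ)
    (hF : ∀ t : ℝ, F t = ∫ s in (0:ℝ)..1, s ^ (2*α) *
      (∫ u in s..1, u ^ β * (u - s) ^ γ) *
      (∫ v in t..(t+1), v ^ β * (v - s) ^ γ))
    (hV : ∀ t : ℝ, V t = ∫ s in (0:ℝ)..(t+1), s ^ (2*α) *
      (∫ u in (max s t)..(t+1), u ^ β * (u - s) ^ γ) ^ 2)
    (hC : C = ∫ s in (0:ℝ)..1, s ^ (2*α) *
      (∫ u in s..1, u ^ β * (u - s) ^ γ) ^ 2)
    (hr : ∀ t : ℝ, r t = F t / (Real.sqrt C * Real.sqrt (V t))) :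
    Tendsto (fun N : ℕ => ∑ n ∈ Finset.range N, r (n + 1)) atTop atTop ∧
    (∫⁻ t in Set.Ici (1:ℝ), ENNReal.ofReal (r t)) = ⊤ := by
  obtain ⟨c, hc, hFle⟩ := exists_covariance_lower_bound hα hγ hαβγ
  obtain ⟨K, hK, hVle⟩ := exists_incrementVariance_bound (β := β) hα hγ hα' hγ'
  have hC0 : 0 < C := by
    rw [hC]
    exact intervalIntegral_pos_of_pos_on (intervalIntegrable_rpow_mul_kernel hα hγ hαβγ).2
      (fun s hs => mul_pos (Real.rpow_pos_of_pos hs.1 _)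
        (pow_pos (integral_rpow_mul_sub_rpow_pos hγ β hs.1 le_rfl hs.2) 2)) one_pos
  set m : ℝ := c / (√C * √K) with hm
  have hsC : 0 < √C := Real.sqrt_pos.2 hC0
  have hsK : 0 < √K := Real.sqrt_pos.2 hK
  have hm0 : 0 < m := by positivity
  have hrle : ∀ t : ℝ, 2 ≤ t → m * ((t + 2) * Real.log (t + 2))⁻¹ ≤ r t := by
    intro t ht
    have ht0 : 0 < t := by linarith
    have hlog : 1 ≤ Real.log (t + 2) := by
      rw [Real.le_log_iff_exp_le (by linarith)]
      linarith [Real.exp_one_lt_d9]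
    have hlog0 : 0 < Real.log (t + 2) := by linarith
    obtain ⟨hVpos, hVt⟩ := hVle t ht
    rw [← hV t] at hVpos hVt
    have hFt := hFle t ht
    rw [← hF t] at hFt
    have hpow : 0 < t ^ (β + γ) := Real.rpow_pos_of_pos ht0 _
    have hsV : √(V t) ≤ √K * (t ^ (β + γ) * (t + 2) * Real.log (t + 2)) := by
      rw [← Real.sqrt_sq (show 0 ≤ t ^ (β + γ) * (t + 2) * Real.log (t + 2) by positivity),
        ← Real.sqrt_mul hK.le]
      refine Real.sqrt_le_sqrt (hVt.trans ?_)
      rw [Real.rpow_add_one ht0.ne', mul_pow (_ * _) (Real.log (t + 2))]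
      gcongr
      · linarith
      · exact le_self_pow₀ hlog two_ne_zero
    rw [hr t]
    calc m * ((t + 2) * Real.log (t + 2))⁻¹
        = c * t ^ (β + γ) / (√C * (√K * (t ^ (β + γ) * (t + 2) * Real.log (t + 2)))) := by
          rw [hm]
          field_simp
      _ ≤ F t / (√C * √(V t)) := by
          have := Real.sqrt_pos.2 hVpos
          gcongr
          exact (by positivity : (0:ℝ) ≤ c * t ^ (β + γ)).trans hFt
  constructor
  · rw [← tendsto_add_atTop_iff_nat 1]
    simp only [Finset.sum_range_succ']
    refine tendsto_atTop_add_const_right _ _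
      (tendsto_atTop_mono ?_ (tendsto_sum_inv_mul_log.const_mul_atTop hm0))
    intro N
    rw [Finset.mul_sum]
    refine Finset.sum_le_sum fun n _ => ?_
    have h := hrle ((n + 1 : ℕ) + 1) (by push_cast; linarith [n.cast_nonneg (α := ℝ)])
    rwa [show ((n + 1 : ℕ) : ℝ) + 1 + 2 = n + 4 by push_cast; ring] at h
  · rw [eq_top_iff, ← lintegral_inv_mul_log_eq_top hm0]
    calc ∫⁻ t in Set.Ici (2:ℝ), ENNReal.ofReal (m * ((t + 2) * Real.log (t + 2))⁻¹)
        ≤ ∫⁻ t in Set.Ici (2:ℝ), ENNReal.ofReal (r t) :=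
          setLIntegral_mono' measurableSet_Ici
            fun t ht => ENNReal.ofReal_le_ofReal (hrle t ht)
      _ ≤ _ := lintegral_mono_set (Set.Ici_subset_Ici.2 one_le_two)
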